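/- arXiv:math/0305430 — 2 statements merged into one kernel-verified Lean document; each statement's English description precedes it below -/
import Mathlib

section
/- For an odd positive integer r and Y = X_{i+1}···X_{i+r}, the sum of all monomials of the standard polynomial s_m(X_1,...,X_m) that formally contain the consecutive factor X_{i+1}X_{i+2}···X_{i+r} equals s_{m-r+1}(X_1,...,X_i, Y, X_{i+r+1},...,X_m). -/
/-- The standard polynomial `s_d` evaluated at `x : Fin d → R`. -/
noncomputable def stdPoly {R : Type*} [Ring R] (d : ℕ) (x : Fin d → R) : R :=
  ∑ σ : Equiv.Perm (Fin d), ((Equiv.Perm.sign σ : ℤˣ) : ℤ) • (List.ofFn fun i => x (σ i)).prod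

/-!
Gluing two consecutive variables `x i`, `x (i + 1)` into their product, and deleting the second of
the two letters from a word in which they are adjacent, matches the monomials containing
`x i * x (i + 1)` with the monomials in one variable fewer. If the block sits at position `p`, the
deleted letter occupies position `p + 1` and has index `i + 1`, so the sign changes by
`(-1) ^ (p + i)`. Reducing a block of length `s + 1` to a single letter takes `s` such deletions at
the same `p` and `i`; for even `s` the signs cancel, and one may sum over all positions `p`.
-/

namespace AmitsurLevitski

open Equiv Equiv.Perm

section InsertPerm

variable {n : ℕ}

/-- The permutation of `Fin (n + 1)` that sends `a` to `b` and acts as `τ` on the remaining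
points, under the order isomorphisms of the complements of `a` and `b` with `Fin n`. Composing
with `Fin.cycleRange` on both sides reduces to `a = b = 0` and makes the sign computable. -/
def insertPerm (a b : Fin (n + 1)) (τ : Perm (Fin n)) : Perm (Fin (n + 1)) :=
  b.cycleRange⁻¹ * decomposeFin.symm (0, τ) * a.cycleRange

@[simp]
lemma insertPerm_self (a b : Fin (n + 1)) (τ : Perm (Fin n)) : insertPerm a b τ a = b := by
  simp [insertPerm, Perm.inv_def]

@[simp]
lemma insertPerm_succAbove (a b : Fin (n + 1)) (τ : Perm (Fin n)) (q : Fin n) :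
    insertPerm a b τ (a.succAbove q) = b.succAbove (τ q) := by
  simp [insertPerm, Perm.inv_def]

lemma sign_insertPerm (a b : Fin (n + 1)) (τ : Perm (Fin n)) :
    sign (insertPerm a b τ) = (-1) ^ (a + b : ℕ) * sign τ := by
  simp only [insertPerm, Perm.sign_mul, sign_inv, Fin.sign_cycleRange, decomposeFin.symm_sign,
    if_true, one_mul, pow_add]
  rw [mul_right_comm, mul_comm ((-1) ^ (b : ℕ))]

lemma insertPerm_injective (a b : Fin (n + 1)) : Function.Injective (insertPerm a b) := by
  intro τ τ' h
  simpa [insertPerm] using h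

lemma exists_insertPerm_eq {a b : Fin (n + 1)} {σ : Perm (Fin (n + 1))} (h : σ a = b) :
    ∃ τ, insertPerm a b τ = σ := by
  obtain ⟨⟨z, τ⟩, hτ⟩ := decomposeFin.symm.surjective (b.cycleRange * σ * a.cycleRange⁻¹)
  obtain rfl : z = 0 := by
    rw [← decomposeFin_symm_apply_zero z τ, hτ]
    simp [Perm.inv_def, h]
  exact ⟨τ, by rw [insertPerm, hτ]; group⟩

end InsertPerm

section ContractNth

variable {n : ℕ}

lemma contractNth_castSucc_eq_update {α : Type*} (op : α → α → α) (p : Fin n)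
    (x : Fin (n + 1) → α) :
    Fin.contractNth p.castSucc op x =
      Function.update (p.succ.removeNth x) p (op (x p.castSucc) (x p.succ)) := by
  funext q
  rcases lt_trichotomy q p with h | rfl | h
  · rw [Fin.contractNth_apply_of_lt _ _ _ _ h, Function.update_of_ne h.ne, Fin.removeNth_apply,
      Fin.succAbove_of_castSucc_lt _ _ (Fin.castSucc_lt_succ_iff.2 h.le)]
  · rw [Fin.contractNth_apply_of_eq _ _ _ _ rfl, Function.update_self]
  · rw [Fin.contractNth_apply_of_gt _ _ _ _ h, Function.update_of_ne h.ne', Fin.removeNth_apply,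
      Fin.succAbove_of_le_castSucc _ _ (Fin.succ_le_castSucc_iff.2 h)]

lemma contractNth_comp_insertPerm {α : Type*} (op : α → α → α) {p i : Fin n} {τ : Perm (Fin n)}
    (h : τ p = i) (x : Fin (n + 1) → α) :
    Fin.contractNth p.castSucc op (x ∘ insertPerm p.succ i.succ τ) =
      Fin.contractNth i.castSucc op x ∘ τ := by
  have hp : insertPerm p.succ i.succ τ p.castSucc = i.castSucc := by
    simpa [h] using insertPerm_succAbove p.succ i.succ τ p
  have hremove : p.succ.removeNth (x ∘ insertPerm p.succ i.succ τ) = i.succ.removeNth x ∘ τ := by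
    funext q
    simp [Fin.removeNth_apply]
  rw [contractNth_castSucc_eq_update, contractNth_castSucc_eq_update, Function.update_comp_equiv,
    hremove, ← h, Equiv.symm_apply_apply, h, Function.comp_apply, Function.comp_apply, hp,
    insertPerm_self]

lemma prod_ofFn_contractNth_castSucc {M : Type*} [Monoid M] (p : Fin n) (x : Fin (n + 1) → M) :
    (List.ofFn (Fin.contractNth p.castSucc (· * ·) x)).prod = (List.ofFn x).prod := by
  have h := congrFun (Fin.partialProd_contractNth x p.castSucc) (Fin.last n)
  rw [Function.comp_apply, Fin.succ_castSucc, Fin.succAbove_castSucc_of_le _ _ (Fin.le_last _)] at h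
  simpa [Fin.partialProd, List.take_of_length_le] using h

end ContractNth

section Block

variable {n s : ℕ}

/-- The `j`-th index of the block of `s + 1` consecutive indices of `Fin (n + s)` starting at `p`;
letting `p` range over `Fin n` makes the block fit. -/
def blockIndex (p : Fin n) (j : Fin (s + 1)) : Fin (n + s) := ⟨p + j, by omega⟩

lemma blockIndex_zero (p : Fin n) : blockIndex p (0 : Fin (s + 1)) = p.castAdd s := rfl

lemma blockIndex_one (p : Fin n) : blockIndex p (1 : Fin (s + 2)) = (p.castAdd s).succ := rfl

lemma blockIndex_succAbove_one (p : Fin n) (j : Fin (s + 1)) :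
    blockIndex p (Fin.succAbove 1 j) = (p.castAdd s).succ.succAbove (blockIndex p j) := by
  cases j using Fin.cases with
  | zero =>
    rw [Fin.succAbove_of_castSucc_lt _ _ (by simp),
      Fin.succAbove_of_castSucc_lt _ _ (by simp [Fin.lt_def, blockIndex])]
    rfl
  | succ j =>
    rw [Fin.succAbove_of_le_castSucc _ _ (by simp [Fin.le_def]),
      Fin.succAbove_of_le_castSucc _ _ (by simp [Fin.le_def, blockIndex])]
    rfl

/-- The word `σ 0, σ 1, …` contains the letters `i, i + 1, …, i + s` consecutively and in this
order, starting at position `p`. -/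
def ContainsBlockAt (p i : Fin n) (σ : Perm (Fin (n + s))) : Prop :=
  ∀ j : Fin (s + 1), σ (blockIndex p j) = blockIndex i j

instance (p i : Fin n) (σ : Perm (Fin (n + s))) : Decidable (ContainsBlockAt p i σ) :=
  inferInstanceAs (Decidable (∀ _, _))

lemma ContainsBlockAt.position_unique {p p' i : Fin n} {σ : Perm (Fin (n + s))}
    (h : ContainsBlockAt p i σ) (h' : ContainsBlockAt p' i σ) : p = p' := by
  have hzero : blockIndex p 0 = blockIndex p' 0 := σ.injective ((h 0).trans (h' 0).symm)
  rw [blockIndex_zero, blockIndex_zero] at hzero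
  exact Fin.castAdd_injective n s hzero

lemma containsBlockAt_iff_apply_eq {p i : Fin n} {σ : Perm (Fin n)} :
    ContainsBlockAt (s := 0) p i σ ↔ σ p = i := by
  simp [ContainsBlockAt, blockIndex]

lemma containsBlockAt_insertPerm {p i : Fin n} {τ : Perm (Fin (n + s))} :
    ContainsBlockAt (s := s + 1) p i (insertPerm (p.castAdd s).succ (i.castAdd s).succ τ) ↔
      ContainsBlockAt p i τ := by
  simp only [ContainsBlockAt, Fin.forall_iff_succAbove (1 : Fin (s + 2)), blockIndex_one,
    blockIndex_succAbove_one, insertPerm_self, insertPerm_succAbove, Fin.succAbove_right_inj,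
    true_and]

lemma exists_nat_containsBlockAt_iff {i : Fin n} {σ : Perm (Fin (n + s))} :
    (∃ p : ℕ, ∀ j < s + 1, ∃ h : p + j < n + s, (σ ⟨p + j, h⟩ : ℕ) = i + j) ↔
      ∃ p : Fin n, ContainsBlockAt p i σ := by
  constructor
  · rintro ⟨p, hp⟩
    obtain ⟨hps, -⟩ := hp s s.lt_succ_self
    exact ⟨⟨p, by omega⟩, fun j => Fin.ext (hp j j.isLt).2⟩
  · rintro ⟨p, hp⟩
    exact ⟨p, fun j hj => ⟨by omega, congrArg Fin.val (hp ⟨j, hj⟩)⟩⟩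

/-- The variables `x 0, …, x (i - 1), Y, x (i + s + 1), …`, where `Y = x i * ⋯ * x (i + s)`. -/
def mergeBlock {M : Type*} [Monoid M] (i : Fin n) (x : Fin (n + s) → M) (k : Fin n) : M :=
  if k < i then x (k.castAdd s)
  else if k = i then (List.ofFn fun j => x (blockIndex i j)).prod
  else x (k.addNat s)

lemma mergeBlock_of_zero {M : Type*} [Monoid M] (i : Fin n) (x : Fin n → M) :
    mergeBlock (s := 0) i x = x := by
  funext k
  unfold mergeBlock
  split_ifs with hlt heq
  · rfl
  · simp [blockIndex, heq]
  · rfl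

lemma mergeBlock_contractNth {M : Type*} [Monoid M] (i : Fin n) (x : Fin (n + s + 1) → M) :
    mergeBlock i (Fin.contractNth (i.castAdd s).castSucc (· * ·) x) =
      mergeBlock (s := s + 1) i x := by
  funext k
  unfold mergeBlock
  split_ifs with hlt heq
  · rw [Fin.contractNth_apply_of_lt _ _ _ _ hlt]
    rfl
  · simp only [List.ofFn_succ, List.prod_cons, ← mul_assoc]
    rw [Fin.contractNth_apply_of_eq _ _ _ _ rfl]
    congr 3
    funext j
    rw [Fin.contractNth_apply_of_gt _ _ _ _ (by simp [blockIndex])]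
    rfl
  · rw [Fin.contractNth_apply_of_gt _ _ _ _ (by
      simp only [Fin.val_castSucc, Fin.val_castAdd, Fin.val_addNat]
      omega)]
    rfl

end Block

section StandardPolynomial

variable {R : Type*} [Ring R] {n s : ℕ}

/-- The monomial of the standard polynomial in `x` indexed by `σ`, including its sign, so that the
standard polynomial is the sum of these over all `σ`. -/
def signedMonomial (x : Fin n → R) (σ : Perm (Fin n)) : R :=
  ((sign σ : ℤˣ) : ℤ) • (List.ofFn fun q => x (σ q)).prod

lemma stdPoly_eq_sum_signedMonomial (x : Fin n → R) :
    stdPoly n x = ∑ σ, signedMonomial x σ := rfl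

lemma stdPoly_comp_cast {d : ℕ} (h : d = n) (x : Fin n → R) :
    stdPoly d (x ∘ Fin.cast h) = stdPoly n x := by
  subst h
  rfl

lemma signedMonomial_insertPerm {p i : Fin n} {τ : Perm (Fin n)} (h : τ p = i)
    (x : Fin (n + 1) → R) :
    signedMonomial x (insertPerm p.succ i.succ τ) =
      (-1 : ℤ) ^ (p + i : ℕ) • signedMonomial (Fin.contractNth i.castSucc (· * ·) x) τ := by
  have hprod : (List.ofFn (x ∘ insertPerm p.succ i.succ τ)).prod =
      (List.ofFn (Fin.contractNth i.castSucc (· * ·) x ∘ τ)).prod := by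
    rw [← prod_ofFn_contractNth_castSucc p, contractNth_comp_insertPerm _ h]
  have hsign : ((sign (insertPerm p.succ i.succ τ) : ℤˣ) : ℤ) = (-1) ^ (p + i : ℕ) * sign τ := by
    rw [sign_insertPerm, Fin.val_succ, Fin.val_succ, add_add_add_comm, pow_add]
    simp
  simp only [signedMonomial, smul_smul, ← hsign]
  exact congrArg _ hprod

lemma sum_containsBlockAt_succ (p i : Fin n) (x : Fin (n + s + 1) → R) :
    ∑ σ with ContainsBlockAt (s := s + 1) p i σ, signedMonomial x σ =
      (-1 : ℤ) ^ (p + i : ℕ) • ∑ τ with ContainsBlockAt p i τ,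
        signedMonomial (Fin.contractNth (i.castAdd s).castSucc (· * ·) x) τ := by
  rw [Finset.smul_sum]
  symm
  refine Finset.sum_nbij (insertPerm (p.castAdd s).succ (i.castAdd s).succ) ?_
    (insertPerm_injective _ _).injOn ?_ ?_
  · intro τ hτ
    simpa [containsBlockAt_insertPerm] using hτ
  · intro σ hσ
    simp only [Finset.coe_filter, Finset.mem_univ, true_and, Set.mem_ofPred_eq] at hσ
    obtain ⟨τ, rfl⟩ := exists_insertPerm_eq (hσ 1)
    exact ⟨τ, by simpa using containsBlockAt_insertPerm.1 hσ, rfl⟩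
  · intro τ hτ
    exact (signedMonomial_insertPerm ((Finset.mem_filter.1 hτ).2 0) x).symm

lemma sum_containsBlockAt (p i : Fin n) (x : Fin (n + s) → R) :
    ∑ σ with ContainsBlockAt p i σ, signedMonomial x σ =
      (-1 : ℤ) ^ ((p + i) * s : ℕ) • ∑ τ with τ p = i, signedMonomial (mergeBlock i x) τ := by
  induction s with
  | zero => simp [mergeBlock_of_zero, containsBlockAt_iff_apply_eq]
  | succ s ih =>
    refine (sum_containsBlockAt_succ p i x).trans ?_
    rw [ih, mergeBlock_contractNth, smul_smul, ← pow_add, mul_add_one, add_comm]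

lemma sum_exists_containsBlockAt {M : Type*} [AddCommMonoid M] (i : Fin n)
    (f : Perm (Fin (n + s)) → M) :
    ∑ σ with ∃ p, ContainsBlockAt p i σ, f σ = ∑ p, ∑ σ with ContainsBlockAt p i σ, f σ := by
  rw [← Finset.sum_biUnion]
  · exact Finset.sum_congr (by ext; simp) fun _ _ => rfl
  · intro p _ p' _ hne
    exact Finset.disjoint_filter.2 fun σ _ h h' => hne (h.position_unique h')

theorem sum_exists_containsBlockAt_eq_stdPoly (hs : Even s) (i : Fin n) (x : Fin (n + s) → R) :
    ∑ σ with ∃ p, ContainsBlockAt p i σ, signedMonomial x σ = stdPoly n (mergeBlock i x) := by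
  calc
    _ = ∑ p, ∑ σ with ContainsBlockAt p i σ, signedMonomial x σ :=
      sum_exists_containsBlockAt i _
    _ = ∑ p, ∑ τ with τ.symm i = p, signedMonomial (mergeBlock i x) τ :=
      Finset.sum_congr rfl fun p _ => by
        simp only [sum_containsBlockAt, (hs.mul_left _).neg_one_pow, one_smul,
          Equiv.symm_apply_eq, eq_comm (a := i)]
    _ = ∑ τ, signedMonomial (mergeBlock i x) τ := Finset.sum_fiberwise _ _ _
    _ = stdPoly n (mergeBlock i x) := (stdPoly_eq_sum_signedMonomial _).symm

end StandardPolynomial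

end AmitsurLevitski

open Classical in
/-- Amitsur–Levitski, Lemma 1: for odd `r` and `Y = X_{i+1} ⋯ X_{i+r}`, the sum of all
monomials of `s_m(X₁,…,X_m)` formally containing the consecutive factor
`X_{i+1} X_{i+2} ⋯ X_{i+r}` equals `s_{m-r+1}(X₁,…,X_i, Y, X_{i+r+1},…,X_m)`. -/
theorem amitsur_levitski_lemma1 (R : Type*) [Ring R] (m i r : ℕ) (hr : Odd r)
    (hir : i + r ≤ m) (X : Fin m → R) :
    (∑ σ ∈ Finset.univ.filter (fun σ : Equiv.Perm (Fin m) =>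
        ∃ p : ℕ, ∀ j : ℕ, (hj : j < r) →
          ∃ hpj : p + j < m, ((σ ⟨p + j, hpj⟩ : Fin m) : ℕ) = i + j),
      ((Equiv.Perm.sign σ : ℤˣ) : ℤ) • (List.ofFn fun q => X (σ q)).prod) =
    stdPoly (m - r + 1) (fun k =>
      if h : (k : ℕ) < i then X ⟨k, by omega⟩
      else if h2 : (k : ℕ) = i then
        (List.ofFn fun j : Fin r => X ⟨i + (j : ℕ), by have := j.isLt; omega⟩).prod
      else X ⟨(k : ℕ) + r - 1, by
        have := k.isLt; rcases hr with ⟨c, hc⟩; omega⟩) := by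
  obtain ⟨c, rfl⟩ := hr
  obtain ⟨n, rfl⟩ : ∃ n, m = n + 2 * c := ⟨m - 2 * c, by omega⟩
  obtain ⟨i, rfl⟩ : ∃ i' : Fin n, (i' : ℕ) = i := ⟨⟨i, by omega⟩, rfl⟩
  have hn : n + 2 * c - (2 * c + 1) + 1 = n := by omega
  calc
    _ = ∑ σ with ∃ p, AmitsurLevitski.ContainsBlockAt p i σ,
          AmitsurLevitski.signedMonomial X σ :=
      Finset.sum_congr
        (by ext; simp [← AmitsurLevitski.exists_nat_containsBlockAt_iff]) fun _ _ => rfl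
    _ = stdPoly n (AmitsurLevitski.mergeBlock i X) :=
      AmitsurLevitski.sum_exists_containsBlockAt_eq_stdPoly (even_two_mul c) i X
    _ = stdPoly _ (AmitsurLevitski.mergeBlock i X ∘ Fin.cast hn) :=
      (AmitsurLevitski.stdPoly_comp_cast hn _).symm
    _ = _ := by
      congr 1
      funext k
      simp only [Function.comp_apply, AmitsurLevitski.mergeBlock, Fin.lt_def, Fin.ext_iff]
      rfl
end

section
/- Let A be the algebra of all (2ℓ+m)×(2ℓ+m) matrices of block form [[a,b,c],[0,e,d],[0,0,a]] with a, c ∈ M_ℓ(F), e ∈ M_m(F), b ∈ M_{ℓ×m}(F), d ∈ M_{m×ℓ}(F) (the same a in both corner positions). Then A satisfies the standard identity s_{2(ℓ+m)}. -/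
open Matrix

/-- Membership in the algebra of block matrices `[[a,b,c],[0,e,d],[0,0,a]]`
(same `a` in both corner diagonal positions). -/
def memA {F : Type*} [Field F] {ℓ m : ℕ}
    (M : Matrix (Fin ℓ ⊕ (Fin m ⊕ Fin ℓ)) (Fin ℓ ⊕ (Fin m ⊕ Fin ℓ)) F) : Prop :=
  (∀ (i : Fin m) (j : Fin ℓ), M (Sum.inr (Sum.inl i)) (Sum.inl j) = 0) ∧
  (∀ (i : Fin ℓ) (j : Fin ℓ), M (Sum.inr (Sum.inr i)) (Sum.inl j) = 0) ∧
  (∀ (i : Fin ℓ) (j : Fin m), M (Sum.inr (Sum.inr i)) (Sum.inr (Sum.inl j)) = 0) ∧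
  (∀ (i j : Fin ℓ), M (Sum.inr (Sum.inr i)) (Sum.inr (Sum.inr j)) = M (Sum.inl i) (Sum.inl j))

/-!
The repeated-corner algebra satisfies every identity of `M_{ℓ+m}(F[ε])`, where `ε ^ 2 = 0`: it is
the image of a subring of this matrix ring, under
`[[a + ε c, b], [ε d, e]] ↦ [[a, b, c], [0, e, d], [0, 0, a]]`. It remains to use the
Amitsur–Levitzki theorem over commutative rings.

That theorem is proved by Rosset's argument. Combine `x₁, …, x_d` into a matrix `A = ∑ xₖ eₖ` over
the exterior algebra of a free module with basis `e₁, …, e_d`, so that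
`A ^ d = s_d(x₁, …, x_d) e₁ ∧ ⋯ ∧ e_d`. The entries of `A ^ 2` are central, while those of odd
powers anticommute, whence `tr (A ^ (2 * k)) = -tr (A ^ (2 * k)) = 0` for `k > 0`. If the scalars
are torsion-free, this forces the characteristic polynomial of the `n × n` matrix `A ^ 2` to be
`X ^ n`, and so `A ^ (2 * n) = 0`. The general case follows by specializing generic matrices
over `ℤ`.
-/

theorem map_stdPoly {R S : Type*} [Ring R] [Ring S] (f : R →+* S) {d : ℕ} (x : Fin d → R) :
    f (stdPoly d x) = stdPoly d (f ∘ x) := by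
  simp [stdPoly, map_list_prod, List.map_ofFn, Function.comp_def]

section TracePowers

open Polynomial

variable {n R : Type*} [Fintype n] [DecidableEq n] [CommRing R]

theorem derivative_det (M : Matrix n n R[X]) :
    derivative M.det = (M.adjugate * M.map derivative).trace := by
  have derivative_column (j : n) :
      (M.adjugate * M.map derivative) j j = (M.updateCol j fun i ↦ derivative (M i j)).det := by
    rw [← cramer_apply, cramer_eq_adjugate_mulVec]
    rfl
  simp only [trace, diag_apply, derivative_column, det_apply, derivative_sum]
  rw [Finset.sum_comm]
  refine Finset.sum_congr rfl fun σ _ ↦ ?_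
  rw [← Finset.smul_sum, Units.smul_def, Units.smul_def, derivative_smul, derivative_prod_finset]
  congr 1
  refine Finset.sum_congr rfl fun j _ ↦ ?_
  rw [← Finset.mul_prod_erase _ _ (Finset.mem_univ j), updateCol_self, mul_comm]
  congr 1
  exact Finset.prod_congr rfl fun i hi ↦ by rw [updateCol_ne (Finset.ne_of_mem_erase hi)]

theorem derivative_charpoly (M : Matrix n n R) :
    derivative M.charpoly = M.charmatrix.adjugate.trace := by
  have derivative_charmatrix : M.charmatrix.map derivative = 1 := by
    ext1 i j
    by_cases h : i = j <;> simp [h, one_apply]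
  rw [charpoly, derivative_det, derivative_charmatrix, mul_one]

theorem X_smul_adjugate_charmatrix (M : Matrix n n R) :
    (X : R[X]) • M.charmatrix.adjugate =
      M.charpoly • (1 : Matrix n n R[X]) + M.map C * M.charmatrix.adjugate := by
  rw [charpoly, ← mul_adjugate, ← add_mul, charmatrix, RingHom.mapMatrix_apply, sub_add_cancel,
    scalar_apply, ← smul_eq_diagonal_mul]

theorem trace_map_mul_mul_adjugate_charmatrix {M Q : Matrix n n R} (hQ : Q.trace = 0) :
    ((Q * M).map C * M.charmatrix.adjugate).trace =
      X * (Q.map C * M.charmatrix.adjugate).trace := by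
  have trace_map : (Q.map C).trace = 0 := by
    rw [← AddMonoidHom.map_trace C, hQ, map_zero]
  rw [← smul_eq_mul (X : R[X]), ← trace_smul, ← Matrix.mul_smul, X_smul_adjugate_charmatrix,
    mul_add, trace_add, Matrix.mul_smul, trace_smul, mul_one, trace_map, smul_zero, zero_add,
    Matrix.map_mul, mul_assoc]

theorem trace_map_pow_mul_adjugate_charmatrix {M : Matrix n n R}
    (h : ∀ k, 0 < k → (M ^ k).trace = 0) (k : ℕ) :
    ((M ^ (k + 1)).map C * M.charmatrix.adjugate).trace =
      X ^ k * (M.map C * M.charmatrix.adjugate).trace := by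
  induction k with
  | zero => simp
  | succ k ih =>
    rw [pow_succ, trace_map_mul_mul_adjugate_charmatrix (h _ k.succ_pos), ih, pow_succ', mul_assoc]

theorem trace_map_mul_adjugate_charmatrix_eq_zero {M : Matrix n n R}
    (h : ∀ k, 0 < k → (M ^ k).trace = 0) : (M.map C * M.charmatrix.adjugate).trace = 0 := by
  -- Paired with `adjugate`, `M ^ (k + 1)` contributes `X ^ k` times the trace in question, so
  -- Cayley–Hamilton says that this trace is annihilated by the characteristic polynomial.
  have cayley_hamilton : ∑ k ∈ Finset.range (M.charpoly.natDegree + 1),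
      M.charpoly.coeff k • M ^ (k + 1) = 0 := by
    simpa [aeval_eq_sum_range, Finset.sum_mul, pow_succ] using
      congrArg (· * M) M.aeval_self_charpoly
  have charpoly_mul : M.charpoly * (M.map C * M.charmatrix.adjugate).trace = 0 := by
    have := congrArg (fun Q ↦ (C.mapMatrix Q * M.charmatrix.adjugate).trace) cayley_hamilton
    nth_rw 1 [M.charpoly.as_sum_range_C_mul_X_pow]
    simpa [Finset.sum_mul, trace_sum, mul_assoc, ← trace_map_pow_mul_adjugate_charmatrix h,
      Matrix.map_smul', trace_smul] using this
  simpa using M.charpoly_monic.isRegular.left (charpoly_mul.trans (mul_zero _).symm)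

theorem charpoly_eq_X_pow_of_trace_pow_eq_zero [IsAddTorsionFree R] {M : Matrix n n R}
    (h : ∀ k, 0 < k → (M ^ k).trace = 0) : M.charpoly = X ^ Fintype.card n := by
  have euler : X * derivative M.charpoly = Fintype.card n • M.charpoly := by
    rw [derivative_charpoly, ← smul_eq_mul, ← trace_smul, X_smul_adjugate_charmatrix, trace_add,
      trace_map_mul_adjugate_charmatrix_eq_zero h, add_zero, trace_smul, trace_one, smul_eq_mul,
      mul_comm, nsmul_eq_mul]
  nontriviality R
  ext k
  rw [coeff_X_pow]
  split_ifs with hk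
  · rw [hk, ← M.charpoly_natDegree_eq_dim, M.charpoly_monic.coeff_natDegree]
  · have coeff_euler :
        (k : ℤ) • M.charpoly.coeff k = (Fintype.card n : ℤ) • M.charpoly.coeff k := by
      have := congrArg (coeff · k) euler
      cases k with
      | zero => simpa using this
      | succ k => simpa [coeff_derivative, mul_comm] using this
    rw [← sub_eq_zero, ← sub_smul, IsAddTorsionFree.zsmul_eq_zero_iff] at coeff_euler
    exact coeff_euler.resolve_right (by omega)

theorem pow_card_eq_zero_of_trace_pow_eq_zero [IsAddTorsionFree R] {M : Matrix n n R}
    (h : ∀ k, 0 < k → (M ^ k).trace = 0) : M ^ Fintype.card n = 0 := by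
  simpa [charpoly_eq_X_pow_of_trace_pow_eq_zero h] using M.aeval_self_charpoly

end TracePowers

section ExteriorAlgebra

open ExteriorAlgebra

variable {R V : Type*} [CommRing R] [AddCommGroup V] [Module R V]

theorem ι_mul_ι_anticomm (v w : V) : ι R v * ι R w = -(ι R w * ι R v) :=
  eq_neg_of_add_eq_zero_left (ι_add_mul_swap v w)

theorem ι_mul_ι_mem_center (v w : V) :
    ι R v * ι R w ∈ Subalgebra.center R (ExteriorAlgebra R V) := by
  rw [Subalgebra.mem_center_iff]
  intro a
  induction a using ExteriorAlgebra.induction with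
  | algebraMap r => exact Algebra.commutes r _
  | ι u =>
    rw [← mul_assoc, ι_mul_ι_anticomm u, neg_mul, mul_assoc, ι_mul_ι_anticomm u, mul_neg, neg_neg,
      mul_assoc]
  | mul a b ha hb => exact (show Commute _ _ from ha).mul_left hb
  | add a b ha hb => exact (show Commute _ _ from ha).add_left hb

theorem trace_mul_eq_neg_of_anticomm {n S : Type*} [Fintype n] [Ring S] {A B : Matrix n n S}
    (h : ∀ i j, A i j * B j i = -(B j i * A i j)) : (A * B).trace = -(B * A).trace := by
  simp only [trace, diag_apply, Matrix.mul_apply, h, Finset.sum_neg_distrib]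
  rw [Finset.sum_comm]

variable {n : Type*} [Fintype n] [DecidableEq n]

theorem exists_map_center_eq_sq (M : Matrix n n V) :
    ∃ B : Matrix n n (Subalgebra.center R (ExteriorAlgebra R V)),
      (Subalgebra.center R (ExteriorAlgebra R V)).val.mapMatrix B = (M.map (ι R)) ^ 2 := by
  refine ⟨of fun i j ↦ ⟨(M.map (ι R) ^ 2) i j, ?_⟩, rfl⟩
  rw [sq, mul_apply]
  exact sum_mem fun k _ ↦ ι_mul_ι_mem_center _ _

theorem ι_mul_map_ι_pow_odd (v : V) (M : Matrix n n V) (k : ℕ) (i j : n) :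
    ι R v * ((M.map (ι R)) ^ (2 * k + 1)) i j = -(((M.map (ι R)) ^ (2 * k + 1)) i j * ι R v) := by
  obtain ⟨B, hB⟩ := exists_map_center_eq_sq (R := R) M
  rw [pow_succ', pow_mul, ← hB, ← map_pow, Matrix.mul_apply, Finset.mul_sum, Finset.sum_mul,
    ← Finset.sum_neg_distrib]
  refine Finset.sum_congr rfl fun l _ ↦ ?_
  have central := Subalgebra.mem_center_iff.mp ((B ^ k) l j).2 (ι R v)
  change ι R v * (ι R (M i l) * ((B ^ k) l j).1) = -(ι R (M i l) * ((B ^ k) l j).1 * ι R v)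
  rw [mul_assoc, ← central, ← mul_assoc, ← mul_assoc, ι_mul_ι_anticomm v, neg_mul]

theorem trace_map_ι_pow_even_eq_zero [IsAddTorsionFree (ExteriorAlgebra R V)] (M : Matrix n n V)
    (k : ℕ) : ((M.map (ι R)) ^ (2 * (k + 1))).trace = 0 := by
  have := trace_mul_eq_neg_of_anticomm (A := M.map (ι R)) (B := M.map (ι R) ^ (2 * k + 1))
    fun i j ↦ ι_mul_map_ι_pow_odd (M i j) M k j i
  rwa [← pow_succ, ← pow_succ', self_eq_neg] at this

theorem map_ι_pow_eq_zero [IsAddTorsionFree (ExteriorAlgebra R V)] (M : Matrix n n V) :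
    (M.map (ι R)) ^ (2 * Fintype.card n) = 0 := by
  obtain ⟨B, hB⟩ := exists_map_center_eq_sq (R := R) M
  have : IsAddTorsionFree (Subalgebra.center R (ExteriorAlgebra R V)) :=
    Subtype.val_injective.isAddTorsionFree
      (Subalgebra.center R (ExteriorAlgebra R V)).val.toAddMonoidHom
  rw [pow_mul, ← hB, ← map_pow, pow_card_eq_zero_of_trace_pow_eq_zero, map_zero]
  intro k hk
  obtain ⟨k, rfl⟩ := Nat.exists_eq_succ_of_ne_zero hk.ne'
  apply Subtype.val_injective
  have := trace_map_ι_pow_even_eq_zero (R := R) M k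
  rw [pow_mul, ← hB, ← map_pow] at this
  exact (AddMonoidHom.map_trace (Subalgebra.center R (ExteriorAlgebra R V)).val _).trans this

theorem isAddTorsionFree_exteriorAlgebra [IsAddTorsionFree R] {I : Type*} [LinearOrder I]
    (b : Module.Basis I R V) : IsAddTorsionFree (ExteriorAlgebra R V) :=
  b.ExteriorAlgebra.repr.injective.isAddTorsionFree b.ExteriorAlgebra.repr.toAddMonoidHom

theorem smul_ιMulti_basisFun_injective (d : ℕ) :
    Function.Injective fun r : R ↦ r • ιMulti R d (Pi.basisFun R (Fin d)) := by
  let volume := liftAlternating (Pi.single d (detRowAlternating (R := R) (n := Fin d)))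
  have volume_ιMulti : volume (ιMulti R d (Pi.basisFun R (Fin d))) = 1 := by
    have basisFun_eq_one : ⇑(Pi.basisFun R (Fin d)) = (1 : Matrix (Fin d) (Fin d) R) := by
      ext i j
      simp [one_apply, Pi.single_apply, eq_comm]
    rw [liftAlternating_apply_ιMulti, Pi.single_eq_same, basisFun_eq_one]
    exact det_one
  intro r s hrs
  simpa [volume_ιMulti] using congrArg volume hrs

end ExteriorAlgebra

section AmitsurLevitzki

open ExteriorAlgebra

variable {n R : Type*} [Fintype n] [DecidableEq n] [CommRing R]

theorem prod_ofFn_map_smul {E : Type*} [Ring E] [Algebra R E] {d : ℕ} (x : Fin d → Matrix n n R)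
    (u : Fin d → E) :
    (List.ofFn fun k ↦ (x k).map (· • u k)).prod =
      (List.ofFn x).prod.map (· • (List.ofFn u).prod) := by
  induction d with
  | zero => ext i j; by_cases h : i = j <;> simp [h]
  | succ d ih =>
    simp only [List.ofFn_succ, List.prod_cons, ih]
    ext i j
    simp [Matrix.mul_apply, Finset.sum_smul, smul_smul, mul_comm]

theorem sum_prod_ofFn_comp_smul {V N : Type*} [AddCommGroup V] [Module R V]
    [AddCommGroup N] [Module R N] {S : Type*} [Ring S] {d : ℕ} (g : V [⋀^Fin d]→ₗ[R] N)
    (v : Fin d → V) (x : Fin d → S) (φ : S →+ R) :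
    ∑ f : Fin d → Fin d, φ (List.ofFn (x ∘ f)).prod • g (v ∘ f) = φ (stdPoly d x) • g v := by
  rw [stdPoly, map_sum, Finset.sum_smul]
  symm
  refine Fintype.sum_of_injective (fun σ : Equiv.Perm (Fin d) ↦ ⇑σ) DFunLike.coe_injective _ _ ?_ ?_
  · intro f hf
    rw [g.map_eq_zero_of_not_injective, smul_zero]
    exact fun hinj ↦ hf ⟨.ofBijective f (Finite.injective_iff_bijective.mp (.of_comp hinj)), rfl⟩
  · intro σ
    rw [g.map_perm, map_zsmul, smul_comm]
    simp [Units.smul_def, Function.comp_def, mul_smul, Int.cast_smul_eq_zsmul]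

/-- The matrices `x k` packed into a single matrix of vectors, whose entry `(i, j)` is
`∑ k, x k i j • e k` in the standard basis `e` of `R ^ d`. -/
def packedMatrix {d : ℕ} (x : Fin d → Matrix n n R) : Matrix n n (Fin d → R) :=
  of fun i j k ↦ x k i j

theorem map_ι_packedMatrix_pow {d : ℕ} (x : Fin d → Matrix n n R) :
    ((packedMatrix x).map (ι R)) ^ d =
      (stdPoly d x).map (· • ιMulti R d (Pi.basisFun R (Fin d))) := by
  set e := Pi.basisFun R (Fin d)
  have expand : (packedMatrix x).map (ι R) = ∑ k, (x k).map (· • ι R (e k)) := by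
    ext1 i j
    simp only [Matrix.sum_apply, map_apply, ← map_smul, ← map_sum]
    congr 1
    ext k
    simp [packedMatrix, e, Pi.single_apply]
  calc
    _ = (List.ofFn fun _ : Fin d ↦ ∑ k, (x k).map (· • ι R (e k))).prod := by
      rw [expand, List.ofFn_const, List.prod_replicate]
    _ = ∑ f : Fin d → Fin d, (List.ofFn fun i ↦ (x (f i)).map (· • ι R (e (f i)))).prod := by
      simpa using (MultilinearMap.mkPiAlgebraFin ℤ d
        (Matrix n n (ExteriorAlgebra R (Fin d → R)))).map_sum fun _ k ↦ (x k).map (· • ι R (e k))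
    _ = ∑ f : Fin d → Fin d, (List.ofFn (x ∘ f)).prod.map (· • ιMulti R d (e ∘ f)) := by
      simp only [ιMulti_apply]
      exact Finset.sum_congr rfl fun f _ ↦ prod_ofFn_map_smul _ _
    _ = (stdPoly d x).map (· • ιMulti R d e) := by
      ext1 i j
      simpa [Matrix.sum_apply] using
        sum_prod_ofFn_comp_smul (ιMulti R d) e x (entryAddMonoidHom R i j)

theorem amitsur_levitzki_of_isAddTorsionFree [IsAddTorsionFree R] {d : ℕ}
    (hd : 2 * Fintype.card n ≤ d) (x : Fin d → Matrix n n R) : stdPoly d x = 0 := by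
  have := isAddTorsionFree_exteriorAlgebra (Pi.basisFun R (Fin d))
  have h := map_ι_packedMatrix_pow x
  rw [pow_eq_zero_of_le hd (map_ι_pow_eq_zero _)] at h
  ext i j
  apply smul_ιMulti_basisFun_injective d
  simpa using congr_fun₂ h.symm i j

theorem amitsur_levitzki {d : ℕ} (hd : 2 * Fintype.card n ≤ d) (x : Fin d → Matrix n n R) :
    stdPoly d x = 0 := by
  let generic (k : Fin d) : Matrix n n (MvPolynomial (Fin d × n × n) ℤ) :=
    of fun i j ↦ MvPolynomial.X (k, i, j)
  let specialize : MvPolynomial (Fin d × n × n) ℤ →+* R :=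
    MvPolynomial.eval₂Hom (Int.castRingHom R) fun p ↦ x p.1 p.2.1 p.2.2
  have specialize_generic : specialize.mapMatrix ∘ generic = x := by
    ext k i j
    simp [specialize, generic]
  rw [← specialize_generic, ← map_stdPoly, amitsur_levitzki_of_isAddTorsionFree hd, map_zero]

end AmitsurLevitzki

section RepeatedCorner

open DualNumber TrivSqZeroExt

variable {m n R : Type*} [Fintype m] [Fintype n] [DecidableEq m] [DecidableEq n] [CommRing R]

/-- The block matrix `[[a, b, c], [0, e, d], [0, 0, a]]`, with the same `a` in both corners. -/
def repeatedCorner (a : Matrix m m R) (b : Matrix m n R) (c : Matrix m m R) (d : Matrix n m R)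
    (e : Matrix n n R) : Matrix (m ⊕ (n ⊕ m)) (m ⊕ (n ⊕ m)) R :=
  fromBlocks a (fromCols b c) 0 (fromBlocks e d 0 a)

variable (m n R) in
/-- The subring of block matrices over the dual numbers whose lower left block is divisible by `ε`,
that is, becomes zero at `ε = 0`. -/
def infinitesimalCorner : Subring (Matrix (m ⊕ n) (m ⊕ n) R[ε]) where
  carrier := {N | ∀ i j, (N (.inr i) (.inl j)).fst = 0}
  zero_mem' _ _ := rfl
  one_mem' _ _ := by simp
  add_mem' hN hP i j := by simp [hN i j, hP i j]
  neg_mem' hN i j := by simp [hN i j]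
  mul_mem' hN hP i j := by simp [Matrix.mul_apply, fst_sum, hN i _, hP _ j]

/-- The homomorphism `[[a + ε c, b], [ε d, e]] ↦ [[a, b, c], [0, e, d], [0, 0, a]]`, which ignores
the `ε`-parts of `b` and `e`. -/
def toRepeatedCorner : infinitesimalCorner m n R →+* Matrix (m ⊕ (n ⊕ m)) (m ⊕ (n ⊕ m)) R where
  toFun N := repeatedCorner
    (N.1.toBlocks₁₁.map fst) (N.1.toBlocks₁₂.map fst) (N.1.toBlocks₁₁.map snd)
    (N.1.toBlocks₂₁.map snd) (N.1.toBlocks₂₂.map fst)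
  map_zero' := by
    ext (_ | _ | _) (_ | _ | _) <;>
      simp [repeatedCorner, toBlocks₁₁, toBlocks₁₂, toBlocks₂₁, toBlocks₂₂]
  map_one' := by
    ext (_ | _ | _) (_ | _ | _) <;>
      simp [repeatedCorner, toBlocks₁₁, toBlocks₁₂, toBlocks₂₁, toBlocks₂₂, one_apply,
        apply_ite fst, apply_ite snd]
  map_add' N P := by
    ext (_ | _ | _) (_ | _ | _) <;>
      simp [repeatedCorner, toBlocks₁₁, toBlocks₁₂, toBlocks₂₁, toBlocks₂₂]
  map_mul' N P := by
    ext (_ | _ | _) (_ | _ | _) <;>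
      simp [repeatedCorner, toBlocks₁₁, toBlocks₁₂, toBlocks₂₁, toBlocks₂₂, Matrix.mul_apply,
        fst_sum, snd_sum, N.2 _ _, P.2 _ _, Finset.sum_add_distrib] <;>
      abel

theorem repeatedCorner_mem_range (a : Matrix m m R) (b : Matrix m n R) (c : Matrix m m R)
    (d : Matrix n m R) (e : Matrix n n R) :
    repeatedCorner a b c d e ∈ (toRepeatedCorner (m := m) (n := n) (R := R)).range := by
  let lift : Matrix (m ⊕ n) (m ⊕ n) R[ε] :=
    fromBlocks (a.map inl + c.map inr) (b.map inl) (d.map inr) (e.map inl)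
  refine ⟨⟨lift, fun i j ↦ by simp [lift]⟩, ?_⟩
  ext (_ | _ | _) (_ | _ | _) <;> simp [lift, toRepeatedCorner, repeatedCorner]

theorem stdPoly_eq_zero_of_mem_range_toRepeatedCorner {t : ℕ}
    (ht : 2 * (Fintype.card m + Fintype.card n) ≤ t)
    {x : Fin t → Matrix (m ⊕ (n ⊕ m)) (m ⊕ (n ⊕ m)) R}
    (hx : ∀ k, x k ∈ (toRepeatedCorner (m := m) (n := n) (R := R)).range) : stdPoly t x = 0 := by
  choose y hy using hx
  have lift_identity : stdPoly t y = 0 := Subtype.val_injective <|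
    (map_stdPoly (infinitesimalCorner m n R).subtype y).trans <|
      amitsur_levitzki (by simpa using ht) _
  rw [← funext hy, ← Function.comp_def, ← map_stdPoly, lift_identity, map_zero]

theorem repeated_corner_satisfies_general {t : ℕ} (ht : 2 * (Fintype.card m + Fintype.card n) ≤ t)
    (x : Fin t → Matrix (m ⊕ (n ⊕ m)) (m ⊕ (n ⊕ m)) R)
    (hx : ∀ k, ∃ a b c d e, x k = repeatedCorner a b c d e) : stdPoly t x = 0 := by
  refine stdPoly_eq_zero_of_mem_range_toRepeatedCorner ht fun k ↦ ?_
  obtain ⟨a, b, c, d, e, hk⟩ := hx k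
  exact hk ▸ repeatedCorner_mem_range a b c d e

end RepeatedCorner

theorem memA.exists_eq_repeatedCorner {F : Type*} [Field F] {ℓ m : ℕ}
    {M : Matrix (Fin ℓ ⊕ (Fin m ⊕ Fin ℓ)) (Fin ℓ ⊕ (Fin m ⊕ Fin ℓ)) F} (hM : memA M) :
    ∃ a b c d e, M = repeatedCorner a b c d e := by
  obtain ⟨h₂₁, h₃₁, h₃₂, h₃₃⟩ := hM
  refine ⟨M.toBlocks₁₁, M.toBlocks₁₂.toCols₁, M.toBlocks₁₂.toCols₂, M.toBlocks₂₂.toBlocks₁₂,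
    M.toBlocks₂₂.toBlocks₁₁, ?_⟩
  ext (_ | _ | _) (_ | _ | _) <;>
    simp [repeatedCorner, toBlocks₁₁, toBlocks₁₂, toBlocks₂₂, h₂₁, h₃₁, h₃₂, h₃₃]

/-- The algebra of block matrices `[[a,b,c],[0,e,d],[0,0,a]]` inside `M_{2ℓ+m}(F)`
satisfies the standard identity `s_{2(ℓ+m)}`. -/
theorem repeated_corner_satisfies (F : Type*) [Field F] (ℓ m : ℕ) (hℓ : 0 < ℓ) (hm : 0 < m) :
    ∀ x : Fin (2 * (ℓ + m)) → Matrix (Fin ℓ ⊕ (Fin m ⊕ Fin ℓ)) (Fin ℓ ⊕ (Fin m ⊕ Fin ℓ)) F,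
      (∀ k, memA (x k)) → stdPoly (2 * (ℓ + m)) x = 0 := fun x hx ↦
  repeated_corner_satisfies_general (by simp) x fun k ↦ (hx k).exists_eq_repeatedCorner
end
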